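/- Soundness of the syntactic assume rule (AssumeS): for every syntactic Boolean state expression p with semantic interpretation ⟦p⟧ : PStates → Bool and every closed syntactic hyper-assertion A, the hyper-triple ⊨ {Π_p(A)} (assume ⟦p⟧) {A} is valid, where Π_p is defined recursively on syntactic hyper-assertions by Π_p(∀⟨φ⟩. A) := ∀⟨φ⟩. (p[φ] ⇒ Π_p(A)) and Π_p(∃⟨φ⟩. A) := ∃⟨φ⟩. (p[φ] ∧ Π_p(A)), acting homomorphically on all other constructors, and p[φ] denotes the instantiation of p in which every program-variable lookup x' is read as φ^P(x'); each syntactic hyper-assertion is interpreted as the hyper-assertion λS. (S satisfies it). -/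

import Mathlib

/-- Commands of the programming language. -/
inductive Cmd (PVar PVal : Type) : Type where
  | skip : Cmd PVar PVal
  | assign : PVar → ((PVar → PVal) → PVal) → Cmd PVar PVal
  | havoc : PVar → Cmd PVar PVal
  | assume : ((PVar → PVal) → Prop) → Cmd PVar PVal
  | seq : Cmd PVar PVal → Cmd PVar PVal → Cmd PVar PVal
  | choice : Cmd PVar PVal → Cmd PVar PVal → Cmd PVar PVal
  | iter : Cmd PVar PVal → Cmd PVar PVal

/-- Big-step semantics ⟨C, σ⟩ → σ'. -/
inductive BigStep {PVar PVal : Type} [DecidableEq PVar] :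
    Cmd PVar PVal → (PVar → PVal) → (PVar → PVal) → Prop where
  | skip (σ : PVar → PVal) : BigStep Cmd.skip σ σ
  | assign (x : PVar) (e : (PVar → PVal) → PVal) (σ : PVar → PVal) :
      BigStep (Cmd.assign x e) σ (Function.update σ x (e σ))
  | havoc (x : PVar) (σ : PVar → PVal) (v : PVal) :
      BigStep (Cmd.havoc x) σ (Function.update σ x v)
  | assume {b : (PVar → PVal) → Prop} {σ : PVar → PVal} (h : b σ) :
      BigStep (Cmd.assume b) σ σ
  | seq {C1 C2 : Cmd PVar PVal} {σ σ' σ'' : PVar → PVal} :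
      BigStep C1 σ σ' → BigStep C2 σ' σ'' → BigStep (Cmd.seq C1 C2) σ σ''
  | choiceL {C1 C2 : Cmd PVar PVal} {σ σ' : PVar → PVal} :
      BigStep C1 σ σ' → BigStep (Cmd.choice C1 C2) σ σ'
  | choiceR {C1 C2 : Cmd PVar PVal} {σ σ' : PVar → PVal} :
      BigStep C2 σ σ' → BigStep (Cmd.choice C1 C2) σ σ'
  | iterNil {C : Cmd PVar PVal} {σ : PVar → PVal} : BigStep (Cmd.iter C) σ σ
  | iterCons {C : Cmd PVar PVal} {σ σ' σ'' : PVar → PVal} :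
      BigStep C σ σ' → BigStep (Cmd.iter C) σ' σ'' → BigStep (Cmd.iter C) σ σ''

/-- Extended states: a logical state paired with a program state. -/
abbrev EState (PVar PVal LVar LVal : Type) : Type :=
  (LVar → LVal) × (PVar → PVal)

/-- Extended semantics of a command on a set of extended states. -/
def sem {PVar PVal LVar LVal : Type} [DecidableEq PVar] (C : Cmd PVar PVal)
    (S : Set (EState PVar PVal LVar LVal)) : Set (EState PVar PVal LVar LVal) :=
  { φ | ∃ σ : PVar → PVal, (φ.1, σ) ∈ S ∧ BigStep C σ φ.2 }

/-- Hyper-assertions: predicates over sets of extended states. -/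
abbrev HAssn (PVar PVal LVar LVal : Type) : Type :=
  Set (EState PVar PVal LVar LVal) → Prop

/-- Validity of a hyper-triple ⊨ {P} C {Q}. -/
def HyperTriple {PVar PVal LVar LVal : Type} [DecidableEq PVar]
    (P : HAssn PVar PVal LVar LVal) (C : Cmd PVar PVal)
    (Q : HAssn PVar PVal LVar LVal) : Prop :=
  ∀ S : Set (EState PVar PVal LVar LVal), P S → Q (sem C S)

/-- Syntactic program expressions (constants, program-variable lookups, binary
operations, unary function applications). Program and logical values are drawn
from a single type `Val`. -/
inductive PExp (PVar Val : Type) : Type where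
  | const : Val → PExp PVar Val
  | var : PVar → PExp PVar Val
  | binop : (Val → Val → Val) → PExp PVar Val → PExp PVar Val → PExp PVar Val
  | fn : (Val → Val) → PExp PVar Val → PExp PVar Val

/-- Semantic interpretation ⟦e⟧ of a syntactic program expression. -/
def PExp.eval {PVar Val : Type} (σ : PVar → Val) : PExp PVar Val → Val
  | .const v => v
  | .var x => σ x
  | .binop op e1 e2 => op (PExp.eval σ e1) (PExp.eval σ e2)
  | .fn f e => f (PExp.eval σ e)

/-- Syntactic hyper-expressions: constants, program-variable lookups φ^P(x) and
logical-variable lookups φ^L(x) (state variables are names in ℕ), binary operations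
and unary function applications. Bound values are represented as constants. -/
inductive HExp (PVar LVar Val : Type) : Type where
  | const : Val → HExp PVar LVar Val
  | pvar : ℕ → PVar → HExp PVar LVar Val
  | lvar : ℕ → LVar → HExp PVar LVar Val
  | binop : (Val → Val → Val) → HExp PVar LVar Val → HExp PVar LVar Val → HExp PVar LVar Val
  | fn : (Val → Val) → HExp PVar LVar Val → HExp PVar LVar Val

/-- Evaluation of a hyper-expression under an environment for state variables. -/
def HExp.eval {PVar LVar Val : Type} (env : ℕ → EState PVar Val LVar Val) :
    HExp PVar LVar Val → Val
  | .const v => v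
  | .pvar n x => (env n).2 x
  | .lvar n x => (env n).1 x
  | .binop op e1 e2 => op (HExp.eval env e1) (HExp.eval env e2)
  | .fn f e => f (HExp.eval env e)

/-- Syntactic hyper-assertions: Boolean constants, comparisons of hyper-expressions,
conjunction, disjunction, value quantifiers (binding represented by Lean functions)
and state quantifiers (binding state-variable names in ℕ). -/
inductive HAssrt (PVar LVar Val : Type) : Type where
  | bconst : Prop → HAssrt PVar LVar Val
  | comp : (Val → Val → Prop) → HExp PVar LVar Val → HExp PVar LVar Val → HAssrt PVar LVar Val
  | conj : HAssrt PVar LVar Val → HAssrt PVar LVar Val → HAssrt PVar LVar Val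
  | disj : HAssrt PVar LVar Val → HAssrt PVar LVar Val → HAssrt PVar LVar Val
  | forallV : (Val → HAssrt PVar LVar Val) → HAssrt PVar LVar Val
  | existsV : (Val → HAssrt PVar LVar Val) → HAssrt PVar LVar Val
  | forallS : ℕ → HAssrt PVar LVar Val → HAssrt PVar LVar Val
  | existsS : ℕ → HAssrt PVar LVar Val → HAssrt PVar LVar Val

/-- Satisfaction of a syntactic hyper-assertion by a set S of extended states,
relative to an environment for state variables. State quantifiers range over S. -/
def HAssrt.sat {PVar LVar Val : Type} (S : Set (EState PVar Val LVar Val))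
    (env : ℕ → EState PVar Val LVar Val) : HAssrt PVar LVar Val → Prop
  | .bconst b => b
  | .comp r e1 e2 => r (HExp.eval env e1) (HExp.eval env e2)
  | .conj A B => HAssrt.sat S env A ∧ HAssrt.sat S env B
  | .disj A B => HAssrt.sat S env A ∨ HAssrt.sat S env B
  | .forallV body => ∀ v : Val, HAssrt.sat S env (body v)
  | .existsV body => ∃ v : Val, HAssrt.sat S env (body v)
  | .forallS n A => ∀ α ∈ S, HAssrt.sat S (Function.update env n α) A
  | .existsS n A => ∃ α ∈ S, HAssrt.sat S (Function.update env n α) A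

/-- Free state variables of a hyper-expression. -/
def HExp.fsv {PVar LVar Val : Type} : HExp PVar LVar Val → Set ℕ
  | .const _ => ∅
  | .pvar n _ => {n}
  | .lvar n _ => {n}
  | .binop _ e1 e2 => HExp.fsv e1 ∪ HExp.fsv e2
  | .fn _ e => HExp.fsv e

/-- Free state variables of a syntactic hyper-assertion. -/
def HAssrt.fsv {PVar LVar Val : Type} : HAssrt PVar LVar Val → Set ℕ
  | .bconst _ => ∅
  | .comp _ e1 e2 => HExp.fsv e1 ∪ HExp.fsv e2
  | .conj A B => HAssrt.fsv A ∪ HAssrt.fsv B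
  | .disj A B => HAssrt.fsv A ∪ HAssrt.fsv B
  | .forallV body => ⋃ v, HAssrt.fsv (body v)
  | .existsV body => ⋃ v, HAssrt.fsv (body v)
  | .forallS n A => HAssrt.fsv A \ {n}
  | .existsS n A => HAssrt.fsv A \ {n}

/-- A syntactic hyper-assertion is closed iff it has no free state variables. -/
def HAssrt.Closed {PVar LVar Val : Type} (A : HAssrt PVar LVar Val) : Prop :=
  HAssrt.fsv A = ∅

/-- Syntactic Boolean state expressions: comparisons of syntactic program expressions
and Boolean connectives. -/
inductive PBExp (PVar Val : Type) : Type where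
  | comp : (Val → Val → Prop) → PExp PVar Val → PExp PVar Val → PBExp PVar Val
  | and : PBExp PVar Val → PBExp PVar Val → PBExp PVar Val
  | or : PBExp PVar Val → PBExp PVar Val → PBExp PVar Val
  | not : PBExp PVar Val → PBExp PVar Val

/-- Semantic interpretation ⟦p⟧ of a syntactic Boolean state expression. -/
def PBExp.eval {PVar Val : Type} (σ : PVar → Val) : PBExp PVar Val → Prop
  | .comp r e1 e2 => r (PExp.eval σ e1) (PExp.eval σ e2)
  | .and b1 b2 => PBExp.eval σ b1 ∧ PBExp.eval σ b2
  | .or b1 b2 => PBExp.eval σ b1 ∨ PBExp.eval σ b2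
  | .not b => ¬ PBExp.eval σ b

/-- The instantiation e[φ] of a program expression at the state variable n. -/
def PExp.atState {PVar LVar Val : Type} (n : ℕ) : PExp PVar Val → HExp PVar LVar Val
  | .const v => .const v
  | .var x => .pvar n x
  | .binop op e1 e2 => .binop op (PExp.atState n e1) (PExp.atState n e2)
  | .fn f e => .fn f (PExp.atState n e)

mutual
/-- p[φ]: the Boolean state expression p instantiated at state variable n, as a
syntactic hyper-assertion. -/
def PBExp.toAssrt {PVar LVar Val : Type} (n : ℕ) : PBExp PVar Val → HAssrt PVar LVar Val
  | .comp r e1 e2 => .comp r (PExp.atState n e1) (PExp.atState n e2)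
  | .and b1 b2 => .conj (PBExp.toAssrt n b1) (PBExp.toAssrt n b2)
  | .or b1 b2 => .disj (PBExp.toAssrt n b1) (PBExp.toAssrt n b2)
  | .not b => PBExp.negToAssrt n b

/-- ¬p[φ]: the negation of p instantiated at state variable n, as a syntactic
hyper-assertion (negation pushed inwards, since the grammar has no negation). -/
def PBExp.negToAssrt {PVar LVar Val : Type} (n : ℕ) : PBExp PVar Val → HAssrt PVar LVar Val
  | .comp r e1 e2 => .comp (fun a b => ¬ r a b) (PExp.atState n e1) (PExp.atState n e2)
  | .and b1 b2 => .disj (PBExp.negToAssrt n b1) (PBExp.negToAssrt n b2)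
  | .or b1 b2 => .conj (PBExp.negToAssrt n b1) (PBExp.negToAssrt n b2)
  | .not b => PBExp.toAssrt n b
end

/-- The syntactic transformation Π_p for assume statements:
Π_p(∀⟨φ⟩. A) = ∀⟨φ⟩. (p[φ] ⇒ Π_p(A)) (implication encoded as ¬p[φ] ∨ Π_p(A)) and
Π_p(∃⟨φ⟩. A) = ∃⟨φ⟩. (p[φ] ∧ Π_p(A)), acting homomorphically on all other
constructors. -/
def HAssrt.assumeT {PVar LVar Val : Type} (p : PBExp PVar Val) :
    HAssrt PVar LVar Val → HAssrt PVar LVar Val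
  | .bconst b => .bconst b
  | .comp r e1 e2 => .comp r e1 e2
  | .conj A B => .conj (HAssrt.assumeT p A) (HAssrt.assumeT p B)
  | .disj A B => .disj (HAssrt.assumeT p A) (HAssrt.assumeT p B)
  | .forallV body => .forallV (fun v => HAssrt.assumeT p (body v))
  | .existsV body => .existsV (fun v => HAssrt.assumeT p (body v))
  | .forallS n A => .forallS n (.disj (PBExp.negToAssrt n p) (HAssrt.assumeT p A))
  | .existsS n A => .existsS n (.conj (PBExp.toAssrt n p) (HAssrt.assumeT p A))

theorem sem_assume {PVar PVal LVar LVal : Type} [DecidableEq PVar]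
    (b : (PVar → PVal) → Prop) (S : Set (EState PVar PVal LVar LVal)) :
    sem (Cmd.assume b) S = {φ ∈ S | b φ.2} := by
  ext ⟨l, σ'⟩
  constructor
  · rintro ⟨σ, hσ, hstep⟩
    cases hstep with
    | assume hb => exact ⟨hσ, hb⟩
  · rintro ⟨hσ', hb⟩
    exact ⟨σ', hσ', .assume hb⟩

section Assume

variable {PVar LVar Val : Type} (S : Set (EState PVar Val LVar Val))
  (env : ℕ → EState PVar Val LVar Val)

theorem PExp.eval_atState (n : ℕ) (e : PExp PVar Val) :
    (e.atState n).eval env = e.eval (env n).2 := by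
  induction e with
  | const v => rfl
  | var x => rfl
  | binop op e₁ e₂ ih₁ ih₂ => simp only [atState, HExp.eval, eval, ih₁, ih₂]
  | fn f e ih => simp only [atState, HExp.eval, eval, ih]

theorem PBExp.sat_negToAssrt (n : ℕ) (p : PBExp PVar Val) :
    (p.negToAssrt n).sat S env ↔ ¬ (p.toAssrt n).sat S env := by
  induction p with
  | comp r e₁ e₂ => rfl
  | and p q ihp ihq => simp only [negToAssrt, toAssrt, HAssrt.sat, ihp, ihq, not_and_or]
  | or p q ihp ihq => simp only [negToAssrt, toAssrt, HAssrt.sat, ihp, ihq, not_or]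
  | not p ih => simp only [negToAssrt, toAssrt, ih, not_not]

theorem PBExp.sat_toAssrt (n : ℕ) (p : PBExp PVar Val) :
    (p.toAssrt n).sat S env ↔ p.eval (env n).2 := by
  induction p with
  | comp r e₁ e₂ => simp only [toAssrt, HAssrt.sat, eval, PExp.eval_atState]
  | and p q ihp ihq => simp only [toAssrt, HAssrt.sat, eval, ihp, ihq]
  | or p q ihp ihq => simp only [toAssrt, HAssrt.sat, eval, ihp, ihq]
  | not p ih => simp only [toAssrt, eval, sat_negToAssrt, ih]

/-- Quantifying over the states of `S` that satisfy `p` is the same as quantifying over `S` with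
the guard that `assumeT` inserts. -/
theorem HAssrt.sat_assumeT (p : PBExp PVar Val) (A : HAssrt PVar LVar Val) :
    (A.assumeT p).sat S env ↔ A.sat {φ ∈ S | p.eval φ.2} env := by
  induction A generalizing env with
  | bconst b => rfl
  | comp r e₁ e₂ => rfl
  | conj A B ihA ihB => simp only [assumeT, sat, ihA, ihB]
  | disj A B ihA ihB => simp only [assumeT, sat, ihA, ihB]
  | forallV body ih => simp only [assumeT, sat, ih]
  | existsV body ih => simp only [assumeT, sat, ih]
  | forallS n A ih =>
    simp only [assumeT, sat, ih, PBExp.sat_negToAssrt, PBExp.sat_toAssrt, Function.update_self,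
      ← imp_iff_not_or, Set.mem_sep_iff, and_imp]
  | existsS n A ih =>
    simp only [assumeT, sat, ih, PBExp.sat_toAssrt, Function.update_self, Set.mem_sep_iff,
      and_assoc]

theorem assumeS_sound_general [DecidableEq PVar] (p : PBExp PVar Val) (A : HAssrt PVar LVar Val) :
    HyperTriple (fun S => (A.assumeT p).sat S env) (Cmd.assume fun σ => p.eval σ)
      (fun S => A.sat S env) := by
  intro S hS
  rw [sem_assume]
  exact (A.sat_assumeT S env p).mp hS

end Assume

/-- Soundness of the syntactic assume rule (AssumeS): ⊨ {Π_p(A)} (assume ⟦p⟧) {A}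
for closed A. -/
theorem assumeS_sound {PVar LVar Val : Type} [DecidableEq PVar]
    (p : PBExp PVar Val) (A : HAssrt PVar LVar Val) (hclosed : A.Closed) :
    ∀ env : ℕ → EState PVar Val LVar Val,
      HyperTriple
        (fun S => HAssrt.sat S env (HAssrt.assumeT p A))
        (Cmd.assume (fun σ => PBExp.eval σ p))
        (fun S => HAssrt.sat S env A) :=
  fun env => assumeS_sound_general env p A
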